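/- Let φ(λ) = bλ + ∫_{(0,∞)} (1 − e^{−λs}) ν(ds) be the Laplace exponent of a subordinator whose Lévy measure ν(dx) has an almost monotone density ν(x). Suppose −φ'' ∈ WUSC(γ, C, x₀) for some C ≥ 1, x₀ ≥ 0 and γ < 0. Then there exist a ∈ (0,1] and c ∈ (0,1] such that for all 0 < x < a/x₀ (all x > 0 if x₀ = 0): ν(x) ≥ c·x^{−3}·(−φ''(1/x)). -/

import Mathlib

open MeasureTheory Real Set

noncomputable section

/-- Weak upper scaling property at infinity. -/
def WUSC (f : ℝ → ℝ) (θ C x₀ : ℝ) : Prop :=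
  ∀ lam : ℝ, 1 ≤ lam → ∀ x : ℝ, x₀ < x → f (lam * x) ≤ C * lam ^ θ * f x

lemma aux_bound1 {k s : ℝ} (hk : 0 < k) (hs : 0 < s) : s * exp (-k * s) ≤ 1 / k := by
  have h := add_one_le_exp (k * s)
  have h2 : exp (-k * s) = (exp (k * s))⁻¹ := by rw [← exp_neg]; ring_nf
  rw [h2, ← div_eq_mul_inv, div_le_div_iff₀ (exp_pos _) hk]
  nlinarith

lemma aux_exp_le_one {k s : ℝ} (hk : 0 < k) (hs : 0 < s) : exp (-k * s) ≤ 1 := by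
  rw [exp_le_one_iff]; nlinarith [mul_pos hk hs]

lemma aux_bound2 {k s : ℝ} (hk : 0 < k) (hs : 0 < s) :
    s * exp (-k * s) ≤ (1 + 1 / k) * min 1 s := by
  have h1 := aux_bound1 hk hs
  have h2 := aux_exp_le_one hk hs
  have h3 : 0 < 1 / k := by positivity
  rcases le_total 1 s with h | h
  · rw [min_eq_left h]; linarith
  · rw [min_eq_right h]; nlinarith [mul_pos h3 hs]

lemma aux_bound3 {k s : ℝ} (hk : 0 < k) (hs : 0 < s) :
    s ^ 2 * exp (-k * s) ≤ (1 / k + 4 / k ^ 2) * min 1 s := by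
  have h1 := aux_bound1 hk hs
  have h2 := aux_bound1 (half_pos hk) hs
  have h3 : 0 < 1 / k := by positivity
  have h4 : 0 < 4 / k ^ 2 := by positivity
  rcases le_total 1 s with h | h
  · rw [min_eq_left h]
    have e : exp (-k * s) = exp (-(k / 2) * s) ^ 2 := by
      rw [← exp_nat_mul]; congr 1; push_cast; ring
    have : (s * exp (-(k / 2) * s)) ^ 2 ≤ (1 / (k / 2)) ^ 2 := by
      have := exp_pos (-(k / 2) * s)
      gcongr
    have e2 : (1 / (k / 2)) ^ 2 = 4 / k ^ 2 := by field_simp; norm_num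
    rw [e, ← mul_pow]
    linarith
  · rw [min_eq_right h]
    nlinarith [mul_pos h4 hs]

lemma aux_exp_mono {k l s : ℝ} (hkl : k ≤ l) (hs : 0 < s) : exp (-l * s) ≤ exp (-k * s) := by
  apply exp_le_exp.2; nlinarith

lemma aux_int_sq {μ : Measure ℝ} (hpos : ∀ᵐ s ∂μ, 0 < s)
    (hint : Integrable (fun s : ℝ => min 1 s) μ) {l : ℝ} (hl : 0 < l) :
    Integrable (fun s : ℝ => s ^ 2 * exp (-l * s)) μ := by
  refine (hint.const_mul (1 / l + 4 / l ^ 2)).mono' (by fun_prop) ?_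
  filter_upwards [hpos] with s hs
  rw [norm_of_nonneg (by positivity)]
  exact aux_bound3 hl hs

lemma aux_deriv2 {μ : Measure ℝ} (hpos : ∀ᵐ s ∂μ, 0 < s)
    (hint : Integrable (fun s : ℝ => min 1 s) μ) {φ : ℝ → ℝ} {b : ℝ}
    (hφ : ∀ lam : ℝ, 0 ≤ lam →
      φ lam = b * lam + ∫ s, (1 - exp (-lam * s)) ∂μ) {l : ℝ} (hl : 0 < l) :
    -(deriv (deriv φ) l) = ∫ s, s ^ 2 * exp (-l * s) ∂μ := by
  have first : ∀ l : ℝ, 0 < l → Integrable (fun s : ℝ => s * exp (-l * s)) μ ∧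
      deriv φ l = b + ∫ s, s * exp (-l * s) ∂μ := by
    intro l hl
    have key := hasDerivAt_integral_of_dominated_loc_of_deriv_le (μ := μ)
      (F := fun l s => 1 - exp (-l * s)) (F' := fun l s => s * exp (-l * s))
      (bound := fun s => (1 + 1 / (l / 2)) * min 1 s)
      (Ioi_mem_nhds (half_lt_self hl))
      (Filter.Eventually.of_forall fun x => by fun_prop) ?_ (by fun_prop) ?_
      (hint.const_mul _) ?_
    · refine ⟨key.1, ?_⟩
      have h1 : HasDerivAt (fun l => b * l + ∫ s, (1 - exp (-l * s)) ∂μ)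
          (b + ∫ s, s * exp (-l * s) ∂μ) l := by
        have h0 : HasDerivAt (fun l : ℝ => b * l) b l := by
          simpa using (hasDerivAt_id l).const_mul b
        exact h0.add key.2
      refine (h1.congr_of_eventuallyEq ?_).deriv
      filter_upwards [Ioi_mem_nhds hl] with x hx
      exact hφ x (le_of_lt hx)
    · refine (hint.const_mul (1 + l)).mono' (by fun_prop) ?_
      filter_upwards [hpos] with s hs
      have h1 := aux_exp_le_one hl hs
      have h2 := add_one_le_exp (-l * s)
      have h3 := exp_pos (-l * s)
      rw [norm_of_nonneg (by linarith)]
      rcases le_total 1 s with h | h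
      · rw [min_eq_left h]; linarith
      · rw [min_eq_right h]; linarith
    · filter_upwards [hpos] with s hs x hx
      rw [norm_of_nonneg (by positivity)]
      refine le_trans ?_ (aux_bound2 (half_pos hl) hs)
      exact mul_le_mul_of_nonneg_left (aux_exp_mono (le_of_lt hx) hs) hs.le
    · filter_upwards with s x hx
      have h0 : HasDerivAt (fun x : ℝ => -x * s) (-1 * s) x :=
        (hasDerivAt_id x).neg.mul_const s
      have := (h0.exp).const_sub 1
      convert this using 1; ring
  have key := hasDerivAt_integral_of_dominated_loc_of_deriv_le (μ := μ)
      (F := fun l s => s * exp (-l * s)) (F' := fun l s => -(s ^ 2 * exp (-l * s)))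
      (bound := fun s => (1 / (l / 2) + 4 / (l / 2) ^ 2) * min 1 s)
      (Ioi_mem_nhds (half_lt_self hl))
      (Filter.Eventually.of_forall fun x => by fun_prop) (first l hl).1 (by fun_prop) ?_
      (hint.const_mul _) ?_
  · have h1 := (key.2.const_add b)
    have h2 : deriv (deriv φ) l = ∫ s, -(s ^ 2 * exp (-l * s)) ∂μ := by
      refine (h1.congr_of_eventuallyEq ?_).deriv
      filter_upwards [Ioi_mem_nhds hl] with x hx
      exact (first x hx).2
    rw [h2, integral_neg, neg_neg]
  · filter_upwards [hpos] with s hs x hx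
    rw [norm_neg, norm_of_nonneg (by positivity)]
    refine le_trans ?_ (aux_bound3 (half_pos hl) hs)
    exact mul_le_mul_of_nonneg_left (aux_exp_mono (le_of_lt hx) hs) (by positivity)
  · filter_upwards with s x hx
    have h0 : HasDerivAt (fun x : ℝ => -x * s) (-1 * s) x :=
      (hasDerivAt_id x).neg.mul_const s
    exact ((h0.exp).const_mul s).congr_deriv (by ring)

lemma aux_gamma {l : ℝ} (hl : 0 < l) :
    ∫ s in Ioi (0:ℝ), s ^ 2 * exp (-l * s) = 2 * (1 / l) ^ 3 := by
  have h := integral_rpow_mul_exp_neg_mul_Ioi (a := 3) (r := l) (by norm_num) hl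
  have hG : Real.Gamma 3 = 2 := by
    have := Real.Gamma_nat_eq_factorial 2
    rw [show (3:ℝ) = ((2:ℕ):ℝ) + 1 by norm_num, this]
    norm_num [Nat.factorial]
  rw [hG] at h
  have e : ∫ s in Ioi (0:ℝ), s ^ 2 * exp (-l * s)
      = ∫ t in Ioi (0:ℝ), t ^ ((3:ℝ) - 1) * exp (-(l * t)) := by
    congr 1; ext t
    rw [show (3:ℝ) - 1 = ((2:ℕ):ℝ) by norm_num, rpow_natCast, neg_mul]
  rw [e, h, show (3:ℝ) = ((3:ℕ):ℝ) by norm_num, rpow_natCast, mul_comm]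

/-- If the Lévy measure has an almost monotone density `νd` and
`−φ'' ∈ WUSC(γ, C, x₀)` with `γ < 0`, then there are `a, c ∈ (0,1]` such that
`νd(x) ≥ c x^{−3} (−φ''(1/x))` for all `0 < x < a/x₀` (all `x > 0` if `x₀ = 0`). -/
theorem levy_density_lower_bound
    (φ : ℝ → ℝ) (b : ℝ) (ν : Measure ℝ) (νd : ℝ → ℝ) (γ C x₀ : ℝ)
    (hb : 0 ≤ b)
    (hνfin : ∫⁻ s in Ioi (0:ℝ), ENNReal.ofReal (min 1 s) ∂ν ≠ ⊤)
    (hφ : ∀ lam : ℝ, 0 ≤ lam →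
      φ lam = b * lam + ∫ s in Ioi (0:ℝ), (1 - Real.exp (-lam * s)) ∂ν)
    (hνd_meas : Measurable νd)
    (hνd_nonneg : ∀ x : ℝ, 0 < x → 0 ≤ νd x)
    (hνd : ν = (volume.restrict (Ioi 0)).withDensity (fun x => ENNReal.ofReal (νd x)))
    (hνd_mono : ∃ Cm : ℝ, 1 ≤ Cm ∧ ∀ x y : ℝ, 0 < x → x ≤ y → νd y ≤ Cm * νd x)
    (hγ : γ < 0) (hC : 1 ≤ C) (hx₀ : 0 ≤ x₀)
    (hscal : WUSC (fun x => -(deriv (deriv φ) x)) γ C x₀) :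
    ∃ a c : ℝ, 0 < a ∧ a ≤ 1 ∧ 0 < c ∧ c ≤ 1 ∧
      ∀ x : ℝ, 0 < x → x * x₀ < a →
        c * (x ^ 3)⁻¹ * -(deriv (deriv φ) (1 / x)) ≤ νd x := by
  obtain ⟨Cm, hCm, hmono⟩ := hνd_mono
  set μ := ν.restrict (Ioi (0:ℝ)) with hμ
  have hpos : ∀ᵐ s ∂μ, 0 < s := ae_restrict_mem measurableSet_Ioi
  have hint : Integrable (fun s : ℝ => min 1 s) μ := by
    refine ⟨by fun_prop, ?_⟩
    rw [hasFiniteIntegral_iff_ofReal]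
    · exact lt_top_iff_ne_top.2 hνfin
    · filter_upwards [hpos] with s hs
      exact le_min zero_le_one hs.le
  set g : ℝ → ℝ := fun l => ∫ s, s ^ 2 * exp (-l * s) ∂μ with hg
  have hder : ∀ l : ℝ, 0 < l → -(deriv (deriv φ) l) = g l := fun l hl =>
    aux_deriv2 hpos hint hφ hl
  have hIsq : ∀ l : ℝ, 0 < l → Integrable (fun s : ℝ => s ^ 2 * exp (-l * s)) μ :=
    fun l hl => aux_int_sq hpos hint hl
  have hganti : ∀ k l : ℝ, 0 < k → k ≤ l → g l ≤ g k := by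
    intro k l hk hkl
    refine integral_mono_ae (hIsq l (hk.trans_le hkl)) (hIsq k hk) ?_
    filter_upwards [hpos] with s hs
    exact mul_le_mul_of_nonneg_left (aux_exp_mono hkl hs) (by positivity)
  have htail : ∀ y l : ℝ, 0 < y → 0 < l →
      ∫ s in Ioi y, s ^ 2 * exp (-l * s) ∂μ ≤ Cm * νd y * (2 * (1 / l) ^ 3) := by
    intro y l hy hl
    have hG := aux_gamma hl
    have hGint : IntegrableOn (fun s : ℝ => s ^ 2 * exp (-l * s)) (Ioi 0) :=
      Integrable.of_integral_ne_zero (by rw [hG]; positivity)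
    have hsub : Ioi y ⊆ Ioi (0:ℝ) := Ioi_subset_Ioi hy.le
    have hA : 0 ≤ Cm * νd y := mul_nonneg (by linarith) (hνd_nonneg y hy)
    have e1 : μ.restrict (Ioi y) =
        (volume.restrict (Ioi y)).withDensity (fun x => ENNReal.ofReal (νd x)) := by
      rw [hμ, Measure.restrict_restrict measurableSet_Ioi, inter_eq_left.2 hsub, hνd,
        restrict_withDensity measurableSet_Ioi, Measure.restrict_restrict measurableSet_Ioi,
        inter_eq_left.2 hsub]
    rw [e1, integral_withDensity_eq_integral_toReal_smul (by fun_prop)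
      (Filter.Eventually.of_forall fun x => ENNReal.ofReal_lt_top)]
    calc _ ≤ ∫ s in Ioi y, (Cm * νd y) * (s ^ 2 * exp (-l * s)) := by
          refine integral_mono_of_nonneg ?_ ((hGint.mono_set hsub).const_mul _) ?_
          · filter_upwards with s
            simp only [Pi.zero_apply, smul_eq_mul]
            positivity
          · filter_upwards [ae_restrict_mem measurableSet_Ioi] with s hs
            have hs' : y < s := hs
            rw [ENNReal.toReal_ofReal (hνd_nonneg s (hy.trans hs')), smul_eq_mul]
            exact mul_le_mul_of_nonneg_right (hmono y s hy hs'.le) (by positivity)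
      _ = (Cm * νd y) * ∫ s in Ioi y, s ^ 2 * exp (-l * s) := integral_const_mul _ _
      _ ≤ _ := by
          rw [← hG]
          refine mul_le_mul_of_nonneg_left ?_ hA
          refine setIntegral_mono_set hGint ?_ hsub.eventuallyLE
          filter_upwards with s
          simp only [Pi.zero_apply]
          positivity
  have hhead : ∀ y l : ℝ, 0 < y → 0 < l →
      ∫ s in (Ioi y)ᶜ, s ^ 2 * exp (-l * s) ∂μ ≤ exp 1 * g (1 / y) := by
    intro y l hy hl
    have hI := (hIsq (1 / y) (by positivity)).const_mul (exp 1)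
    calc _ ≤ ∫ s in (Ioi y)ᶜ, exp 1 * (s ^ 2 * exp (-(1 / y) * s)) ∂μ := by
          refine integral_mono_ae (hIsq l hl).integrableOn hI.integrableOn ?_
          filter_upwards [ae_restrict_of_ae hpos,
            ae_restrict_mem measurableSet_Ioi.compl] with s hs hs2
          have hs3 : s ≤ y := not_lt.1 hs2
          have h1 := aux_exp_le_one hl hs
          have h2 : 1 ≤ exp 1 * exp (-(1 / y) * s) := by
            rw [← exp_add]
            apply one_le_exp
            have : s / y ≤ 1 := (div_le_one hy).2 hs3
            have e : -(1 / y) * s = -(s / y) := by ring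
            rw [e]; linarith
          have h3 : 0 ≤ s ^ 2 := by positivity
          calc s ^ 2 * exp (-l * s) ≤ s ^ 2 * (exp 1 * exp (-(1 / y) * s)) :=
                mul_le_mul_of_nonneg_left (h1.trans h2) h3
            _ = _ := by ring
      _ ≤ ∫ s, exp 1 * (s ^ 2 * exp (-(1 / y) * s)) ∂μ := by
          refine setIntegral_le_integral hI ?_
          filter_upwards with s
          simp only [Pi.zero_apply]
          positivity
      _ = _ := integral_const_mul _ _
  have hsplit : ∀ y l : ℝ, 0 < y → 0 < l →
      g l ≤ Cm * νd y * (2 * (1 / l) ^ 3) + exp 1 * g (1 / y) := by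
    intro y l hy hl
    have := integral_add_compl (measurableSet_Ioi (a := y)) (hIsq l hl)
    have h1 := htail y l hy hl
    have h2 := hhead y l hy hl
    simp only [hg] at *
    linarith
  -- choice of the scaling factor
  obtain ⟨L, hL1, hL2⟩ : ∃ L : ℝ, 1 ≤ L ∧ exp 1 * (C * L ^ γ) ≤ 1 / 2 := by
    have ht : Filter.Tendsto (fun L : ℝ => exp 1 * (C * L ^ γ)) Filter.atTop (nhds 0) := by
      have h := (tendsto_rpow_neg_atTop (y := -γ) (by linarith)).const_mul C
      have h := h.const_mul (exp 1)
      simpa using h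
    have h1 := ht.eventually (ge_mem_nhds (show (0:ℝ) < 1 / 2 by norm_num))
    obtain ⟨L, h2, h3⟩ := (h1.and (Filter.eventually_ge_atTop 1)).exists
    exact ⟨L, h3, h2⟩
  have hL0 : 0 < L := by linarith
  have hL3 : 1 ≤ L ^ 3 := one_le_pow₀ hL1
  refine ⟨1 / L, 1 / (4 * Cm * L ^ 3), by positivity, (div_le_one hL0).2 hL1, by positivity,
    (div_le_one (by positivity)).2 (by nlinarith), ?_⟩
  intro y hy hyx
  have hl : 0 < 1 / (L * y) := by positivity
  have hx : x₀ < 1 / (L * y) := by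
    rw [lt_div_iff₀ (by positivity)]
    rw [lt_div_iff₀ hL0] at hyx
    linarith
  have hle : 1 / (L * y) ≤ 1 / y := by
    apply one_div_le_one_div_of_le hy
    nlinarith
  have hs := hscal L hL1 _ hx
  have e : L * (1 / (L * y)) = 1 / y := by field_simp
  simp only [e] at hs
  rw [hder _ hl, hder _ (by positivity)] at hs
  rw [hder _ (by positivity)]
  have hsp := hsplit y _ hy hl
  have hg0 : 0 ≤ g (1 / (L * y)) := integral_nonneg fun s => by positivity
  have h1 : exp 1 * g (1 / y) ≤ 1 / 2 * g (1 / (L * y)) := by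
    calc _ ≤ exp 1 * (C * L ^ γ * g (1 / (L * y))) :=
          mul_le_mul_of_nonneg_left hs (exp_pos 1).le
      _ = (exp 1 * (C * L ^ γ)) * g (1 / (L * y)) := by ring
      _ ≤ _ := mul_le_mul_of_nonneg_right hL2 hg0
  have h2 := hganti _ _ hl hle
  rw [one_div_one_div] at hsp
  have h3 : g (1 / y) ≤ 4 * Cm * L ^ 3 * y ^ 3 * νd y := by
    have : Cm * νd y * (2 * (L * y) ^ 3) = 1 / 2 * (4 * Cm * L ^ 3 * y ^ 3 * νd y) := by ring
    linarith
  have e2 : 1 / (4 * Cm * L ^ 3) * (y ^ 3)⁻¹ * g (1 / y)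
      = g (1 / y) / (4 * Cm * L ^ 3 * y ^ 3) := by
    field_simp
  rw [e2, div_le_iff₀ (by positivity)]
  linarith
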